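/- Let V be a finite linearly ordered set, σ a permutation of V, and for α ≥ 1 let j_α be the number of orbits of ⟨σ⟩ on V of cardinality α. Let W be the free ℚ-vector space with basis the 2-element subsets {x,y} of V, and let A_σ : W → W send the basis vector indexed by {x,y} with x < y to +e_{{σx,σy}} if σx < σy and to −e_{{σx,σy}} if σx > σy. Then, as polynomials in t: det(1 − t·A_σ) = sgn(σ) · Π_{α≥1} (1 − t^{2α−1})^{(α−1)·j_{2α−1}} · Π_{α≥1} [−(1 + t^α)·(1 − t^{2α})^{α−1}]^{j_{2α}} · Π_{α≥1} (1 − t^α)^{α·j_α(j_α−1)/2} · Π_{β>α≥1} (1 − t^{lcm(α,β)})^{gcd(α,β)·j_α·j_β}. (Equivalently, the total character ξ^{−+−}_{j,0} of the graph space with oriented edges which are odd under orientation reversal, multiple edges allowed, and odd symmetry under vertex permutations, equals sgn(σ)/det(1 − t·A_σ).) -/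

import Mathlib

open Polynomial

/-- The matrix (in the basis indexed by pairs `x < y`) of the signed permutation
endomorphism `A_σ` sending the basis vector `e_{x,y}` (for `x < y`) to `e_{σx,σy}` if
`σx < σy` and to `-e_{σy,σx}` if `σx > σy`. -/
def pairMatrix {V : Type*} [LinearOrder V] (σ : Equiv.Perm V) :
    Matrix {p : V × V // p.1 < p.2} {p : V × V // p.1 < p.2} ℚ :=
  fun q p =>
    if (q : V × V) = (σ p.1.1, σ p.1.2) then 1
    else if (q : V × V) = (σ p.1.2, σ p.1.1) then -1 else 0

namespace S7

def HasLog (f : ℚ[X]) (a : ℕ → ℚ) : Prop :=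
  f.coeff 0 = 1 ∧ PowerSeries.derivative ℚ (f : PowerSeries ℚ) =
    - ((f : PowerSeries ℚ) * PowerSeries.mk (fun k => a (k + 1)))

lemma HasLog.one : HasLog 1 (fun _ => 0) := by
  refine ⟨by simp, ?_⟩
  have : PowerSeries.mk (fun _ : ℕ => (0 : ℚ)) = 0 := by ext; simp
  simp [this]

lemma HasLog.mul {f g : ℚ[X]} {a b : ℕ → ℚ} (hf : HasLog f a) (hg : HasLog g b) :
    HasLog (f * g) (fun k => a k + b k) := by
  refine ⟨by simp [Polynomial.mul_coeff_zero, hf.1, hg.1], ?_⟩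
  have : PowerSeries.mk (fun k => a (k+1) + b (k+1)) =
    PowerSeries.mk (fun k => a (k+1)) + PowerSeries.mk (fun k => b (k+1)) := by ext; simp
  rw [this, Polynomial.coe_mul, Derivation.leibniz, hf.2, hg.2]
  simp only [smul_eq_mul]; ring

lemma HasLog.pow {f : ℚ[X]} {a : ℕ → ℚ} (hf : HasLog f a) (n : ℕ) :
    HasLog (f ^ n) (fun k => n * a k) := by
  induction n with
  | zero => simpa using HasLog.one
  | succ n ih =>
    rw [pow_succ]
    convert ih.mul hf using 2
    push_cast; ring

lemma HasLog.prod {ι : Type*} (s : Finset ι) {f : ι → ℚ[X]} {a : ι → ℕ → ℚ}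
    (h : ∀ i ∈ s, HasLog (f i) (a i)) :
    HasLog (∏ i ∈ s, f i) (fun k => ∑ i ∈ s, a i k) := by
  classical
  induction s using Finset.induction_on with
  | empty => simpa using HasLog.one
  | insert i s hi ih =>
    rw [Finset.prod_insert hi]
    simp only [Finset.sum_insert hi]
    exact (h i (by simp)).mul (ih fun i hi => h i (by simp [hi]))

lemma HasLog.unique {f g : ℚ[X]} {a b : ℕ → ℚ} (hf : HasLog f a) (hg : HasLog g b)
    (hab : ∀ k, 1 ≤ k → a k = b k) : f = g := by
  have e : PowerSeries.mk (fun k => a (k+1)) = PowerSeries.mk (fun k => b (k+1)) := by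
    ext k; simp [hab]
  have h1 := hf.2
  have h2 := hg.2
  rw [e] at h1
  have cg : PowerSeries.constantCoeff (g : PowerSeries ℚ) = 1 := by
    rw [← PowerSeries.coeff_zero_eq_constantCoeff_apply, Polynomial.coeff_coe, hg.1]
  have cf : PowerSeries.constantCoeff (f : PowerSeries ℚ) = 1 := by
    rw [← PowerSeries.coeff_zero_eq_constantCoeff_apply, Polynomial.coeff_coe, hf.1]
  have hgi : (g : PowerSeries ℚ) * (g : PowerSeries ℚ)⁻¹ = 1 :=
    PowerSeries.mul_inv_cancel _ (by simp [cg])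
  have key : (f : PowerSeries ℚ) * (g : PowerSeries ℚ)⁻¹ = 1 := by
    apply PowerSeries.derivative.ext
    · rw [Derivation.leibniz, PowerSeries.derivative_inv', h1, h2]
      simp only [smul_eq_mul, PowerSeries.derivative_one]
      linear_combination (f : PowerSeries ℚ) * (g : PowerSeries ℚ)⁻¹ * PowerSeries.mk (fun k => b (k+1)) * hgi
    · simp [cf, cg]
  have : (f : PowerSeries ℚ) = g := by
    linear_combination (g : PowerSeries ℚ) * key - (f : PowerSeries ℚ) * hgi
  exact_mod_cast this

/-- `1 - c X^n`. -/
lemma hasLog_one_sub (c : ℚ) (n : ℕ) (hn : 1 ≤ n) :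
    HasLog (1 - C c * X ^ n) (fun k => if n ∣ k then n * c ^ (k / n) else 0) := by
  refine ⟨by simp [Polynomial.coeff_X_pow]; omega, ?_⟩
  rw [PowerSeries.derivative_coe]
  ext k
  have e1 : ((1 - C c * X ^ n : ℚ[X]) : PowerSeries ℚ) = 1 - PowerSeries.C c * PowerSeries.X ^ n := by
    simp
  rw [e1, sub_mul, one_mul, mul_assoc, Polynomial.coeff_coe, Polynomial.coeff_derivative]
  simp only [map_neg, map_sub, PowerSeries.coeff_mk, PowerSeries.coeff_C_mul, PowerSeries.coeff_X_pow_mul',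
    Polynomial.coeff_sub, Polynomial.coeff_one, Polynomial.coeff_C_mul, Polynomial.coeff_X_pow]
  rcases lt_trichotomy (k + 1) n with h | h | h
  · have : ¬ n ∣ k + 1 := Nat.not_dvd_of_pos_of_lt (by omega) h
    simp [this, h.ne, show ¬ n ≤ k by omega]
  · subst h
    simp
    ring
  · have h2 : n ≤ k := by omega
    have e : k - n + 1 = k + 1 - n := by omega
    have h3 : n ∣ k + 1 - n ↔ n ∣ k + 1 := by
      constructor
      · intro hh; have := hh.add (dvd_refl n); rwa [Nat.sub_add_cancel h.le] at this
      · intro hh; exact Nat.dvd_sub hh dvd_rfl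
    simp only [h2, if_true, e, h3]
    by_cases hd : n ∣ k + 1
    · have : (k + 1) / n = (k + 1 - n) / n + 1 := by
        rw [← Nat.add_div_right _ (by omega), Nat.sub_add_cancel h.le]
      simp only [hd, if_true, this, pow_succ, h.ne']
      simp
      ring
    · simp [hd, h.ne']

lemma derivative_det {n : Type*} [Fintype n] [DecidableEq n] (M : Matrix n n ℚ[X]) :
    derivative M.det = (M.adjugate * M.map derivative).trace := by
  have h1 : ∀ i, (M.adjugate * M.map derivative) i i = (M.updateCol i (fun r => derivative (M r i))).det := by
    intro i
    rw [← Matrix.cramer_apply, Matrix.cramer_eq_adjugate_mulVec]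
    rfl
  simp only [Matrix.trace, Matrix.diag_apply, h1, Matrix.det_apply, derivative_sum, derivative_smul]
  rw [Finset.sum_comm]
  refine Finset.sum_congr rfl fun τ _ => ?_
  rw [Polynomial.derivative_prod_finset, Finset.smul_sum]
  refine Finset.sum_congr rfl fun i _ => ?_
  rw [← Finset.mul_prod_erase _ _ (Finset.mem_univ i), Matrix.updateCol_self, mul_comm]
  congr 2
  refine Finset.prod_congr rfl fun r hr => ?_
  rw [Matrix.updateCol_ne (Finset.ne_of_mem_erase hr)]

lemma hasLog_det {n : Type*} [Fintype n] [DecidableEq n] (A : Matrix n n ℚ) :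
    HasLog (1 - (X : ℚ[X]) • (A.map C)).det (fun k => (A ^ k).trace) := by
  set M := (1 - (X : ℚ[X]) • (A.map C)) with hM
  constructor
  · rw [Polynomial.coeff_zero_eq_eval_zero]
    have := (Polynomial.evalRingHom (0:ℚ)).map_det M
    simp only [coe_evalRingHom] at this
    rw [this]
    have : (Polynomial.evalRingHom (0:ℚ)).mapMatrix M = 1 := by
      ext i j
      simp [hM, Matrix.one_apply]
      split_ifs <;> simp
    rw [this]; simp
  · rw [PowerSeries.derivative_coe, derivative_det]
    let φ := (Polynomial.coeToPowerSeries.ringHom (R := ℚ))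
    let R : Matrix n n (PowerSeries ℚ) := Matrix.of fun i j => PowerSeries.mk (fun k => (A ^ k) i j)
    let A' : Matrix n n (PowerSeries ℚ) := A.map PowerSeries.C
    have hφM : φ.mapMatrix M = 1 - (PowerSeries.X : PowerSeries ℚ) • A' := by
      ext1 i j
      simp [hM, φ, A', Matrix.one_apply]
      split_ifs <;> simp [mul_comm]
    have hRA : R * A' = Matrix.of fun i j => PowerSeries.mk (fun k => (A ^ (k+1)) i j) := by
      ext i j k
      simp [Matrix.mul_apply, R, A', pow_succ]
    have hAR : A' * R = Matrix.of fun i j => PowerSeries.mk (fun k => (A ^ (k+1)) i j) := by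
      ext i j k
      simp [Matrix.mul_apply, R, A', pow_succ']
    have hMR : φ.mapMatrix M * R = 1 := by
      rw [hφM, sub_mul, one_mul, smul_mul_assoc, hAR]
      ext i j k
      rcases k with _ | k
      · simp [R, Matrix.one_apply]
      · simp [R, Matrix.one_apply, PowerSeries.coeff_succ_X_mul]; split_ifs <;> simp
    have hadj : φ.mapMatrix M.adjugate = φ M.det • R := by
      have : φ.mapMatrix M.adjugate * φ.mapMatrix M = φ M.det • 1 := by
        rw [← map_mul, Matrix.adjugate_mul]
        ext1 i j
        simp [Matrix.one_apply]
        split_ifs <;> simp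
      calc φ.mapMatrix M.adjugate = φ.mapMatrix M.adjugate * (φ.mapMatrix M * R) := by rw [hMR, mul_one]
        _ = _ := by rw [← mul_assoc, this, smul_mul_assoc, one_mul]
    have hder : φ.mapMatrix (M.map derivative) = - A' := by
      ext1 i j
      simp [hM, A', φ, Matrix.one_apply]
      split_ifs <;> simp
    change φ (M.adjugate * M.map derivative).trace =
      - (φ M.det * PowerSeries.mk (fun k => (A ^ (k + 1)).trace))
    have : φ (M.adjugate * M.map derivative).trace = (φ.mapMatrix (M.adjugate * M.map derivative)).trace := by
      rw [RingHom.mapMatrix_apply, Matrix.trace, Matrix.trace, map_sum]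
      rfl
    rw [this, map_mul, hadj, hder, mul_neg, smul_mul_assoc, hRA, Matrix.trace_neg, Matrix.trace_smul, smul_eq_mul]
    congr 2
    ext k
    simp [Matrix.trace]

section
variable {V : Type*} [Fintype V] [LinearOrder V]

lemma pairMatrix_apply' (σ : Equiv.Perm V) (q p : {p : V × V // p.1 < p.2}) :
    pairMatrix σ q p = if q.1.1 = σ p.1.1 ∧ q.1.2 = σ p.1.2 then 1
    else if q.1.1 = σ p.1.2 ∧ q.1.2 = σ p.1.1 then -1 else 0 := by
  simp only [pairMatrix, Prod.ext_iff]

lemma pairMatrix_mul (σ τ : Equiv.Perm V) :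
    pairMatrix (σ * τ) = pairMatrix σ * pairMatrix τ := by
  ext q r
  obtain ⟨⟨a, b⟩, hab⟩ := q
  obtain ⟨⟨x, y⟩, hxy⟩ := r
  simp only at hab hxy
  have hne : τ x ≠ τ y := fun h => hxy.ne (τ.injective h)
  rw [Matrix.mul_apply]
  rcases lt_or_gt_of_ne hne with h | h
  · rw [Finset.sum_eq_single (⟨(τ x, τ y), h⟩ : {p : V × V // p.1 < p.2})]
    · simp only [pairMatrix_apply', Equiv.Perm.mul_apply, and_self, if_true, mul_one]
      congr
    · rintro ⟨⟨c, d⟩, hcd⟩ _ hn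
      simp only at hcd
      have h1 : ¬ (c = τ x ∧ d = τ y) := by rintro ⟨rfl, rfl⟩; exact hn rfl
      have h2 : ¬ (c = τ y ∧ d = τ x) := by rintro ⟨rfl, rfl⟩; exact lt_asymm h hcd
      simp [pairMatrix_apply', h1, h2]
    · simp
  · rw [Finset.sum_eq_single (⟨(τ y, τ x), h⟩ : {p : V × V // p.1 < p.2})]
    · simp only [pairMatrix_apply', Equiv.Perm.mul_apply]
      have hne' : σ (τ x) ≠ σ (τ y) := fun h => hne (σ.injective h)
      simp only [hne, hne.symm, and_self, if_true, if_false]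
      by_cases h1 : a = σ (τ x) ∧ b = σ (τ y)
      · obtain ⟨rfl, rfl⟩ := h1
        simp [hne, hne.symm]
      · by_cases h2 : a = σ (τ y) ∧ b = σ (τ x)
        · simp [h2, hxy.ne]
        · simp [h1, h2]
    · rintro ⟨⟨c, d⟩, hcd⟩ _ hn
      simp only at hcd
      have h1 : ¬ (c = τ y ∧ d = τ x) := by rintro ⟨rfl, rfl⟩; exact hn rfl
      have h2 : ¬ (c = τ x ∧ d = τ y) := by rintro ⟨rfl, rfl⟩; exact lt_asymm h hcd
      simp [pairMatrix_apply', h1, h2]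
    · simp

lemma pairMatrix_one : pairMatrix (1 : Equiv.Perm V) = 1 := by
  ext q r
  obtain ⟨⟨a, b⟩, hab⟩ := q
  obtain ⟨⟨x, y⟩, hxy⟩ := r
  simp only at hab hxy
  simp only [pairMatrix_apply', Matrix.one_apply, Equiv.Perm.one_apply, Subtype.mk.injEq, Prod.mk.injEq]
  have : ¬ (a = y ∧ b = x) := by rintro ⟨rfl, rfl⟩; exact lt_asymm hab hxy
  simp [this]

lemma pairMatrix_pow (σ : Equiv.Perm V) (k : ℕ) : pairMatrix σ ^ k = pairMatrix (σ ^ k) := by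
  induction k with
  | zero => simp [pairMatrix_one]
  | succ k ih => rw [pow_succ, pow_succ, ih, pairMatrix_mul]

lemma trace_pair (τ : Equiv.Perm V) :
    2 * (pairMatrix τ).trace =
      ((Finset.univ.filter fun x => τ x = x).card : ℚ) ^ 2 -
        ((Finset.univ.filter fun x => (τ * τ) x = x).card : ℚ) := by
  let g : V × V → ℚ := fun p => (if τ p.1 = p.1 then 1 else 0) * (if τ p.2 = p.2 then 1 else 0)
    - (if τ p.1 = p.2 then 1 else 0) * (if τ p.2 = p.1 then 1 else 0)
  have h1 : (pairMatrix τ).trace = ∑ p ∈ Finset.univ.filter (fun p : V × V => p.1 < p.2), g p := by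
    rw [Matrix.trace, ← Finset.sum_subtype_eq_sum_filter]
    simp only [Finset.subtype_univ]
    refine Finset.sum_congr rfl fun p _ => ?_
    obtain ⟨⟨x, y⟩, hxy⟩ := p
    simp only at hxy
    have := hxy.ne
    have := hxy.ne'
    simp only [Matrix.diag_apply, pairMatrix_apply', g]
    by_cases a1 : τ x = x <;> by_cases a2 : τ y = y <;> by_cases a3 : τ x = y <;> by_cases a4 : τ y = x <;> grind
  have h2 : ∑ p ∈ Finset.univ.filter (fun p : V × V => p.2 < p.1), g p
      = ∑ p ∈ Finset.univ.filter (fun p : V × V => p.1 < p.2), g p := by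
    refine Finset.sum_bij' (fun p _ => p.swap) (fun p _ => p.swap) ?_ ?_ ?_ ?_ ?_ <;>
      simp [g]
    intro a b _
    congr 1 <;> split_ifs <;> rfl
  have h3 : ∑ p : V × V, g p = 2 * ∑ p ∈ Finset.univ.filter (fun p : V × V => p.1 < p.2), g p := by
    rw [two_mul]
    nth_rewrite 2 [← h2]
    simp only [Finset.sum_filter]
    rw [← Finset.sum_add_distrib]
    refine Finset.sum_congr rfl fun p _ => ?_
    rcases lt_trichotomy p.1 p.2 with h | h | h
    · simp [h, h.not_gt]
    · simp [h, g]
    · simp [h, h.not_gt]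
  rw [h1, ← h3, Fintype.sum_prod_type]
  simp only [g, Finset.sum_sub_distrib]
  congr 1
  · rw [sq, Finset.card_filter]
    push_cast
    rw [Finset.sum_mul_sum]
  · rw [Finset.card_filter]
    push_cast
    refine Finset.sum_congr rfl fun x _ => ?_
    rw [Finset.sum_eq_single (τ x)]
    · by_cases h : τ (τ x) = x <;> simp [h]
    · intro b _ hb
      simp [hb.symm]
    · simp

end

section
variable {V : Type*} [Fintype V] [DecidableEq V]

/-- number of points of minimal period `n` -/
noncomputable def cnt (σ : Equiv.Perm V) (n : ℕ) : ℕ :=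
  (Finset.univ.filter fun x => Function.minimalPeriod σ x = n).card

lemma period_eq_orbit (σ : Equiv.Perm V) (x : V) :
    Function.minimalPeriod σ x = Nat.card (MulAction.orbit (Subgroup.zpowers σ) x) := by
  classical
  rw [Nat.card_eq_fintype_card]
  exact MulAction.minimalPeriod_eq_card σ x

lemma period_pos (σ : Equiv.Perm V) (x : V) : 1 ≤ Function.minimalPeriod σ x := by
  rw [period_eq_orbit]
  have : Nonempty (MulAction.orbit (Subgroup.zpowers σ) x) := (MulAction.nonempty_orbit x).to_subtype
  exact Nat.card_pos

lemma period_le (σ : Equiv.Perm V) (x : V) : Function.minimalPeriod σ x ≤ Fintype.card V := by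
  rw [period_eq_orbit, ← Nat.card_eq_fintype_card]
  exact Nat.card_le_card_of_injective _ Subtype.val_injective

lemma cnt_orbits (σ : Equiv.Perm V) (n : ℕ) :
    cnt σ n = n * Nat.card {O : MulAction.orbitRel.Quotient
        (Subgroup.zpowers σ) V // Nat.card O.orbit = n} := by
  classical
  let Q := MulAction.orbitRel.Quotient (Subgroup.zpowers σ) V
  have : Fintype Q := Fintype.ofFinite Q
  let f : V → Q := fun x => Quotient.mk'' x
  have hO : ∀ x, (f x).orbit = MulAction.orbit (Subgroup.zpowers σ) x := fun x => rfl
  rw [Nat.card_eq_fintype_card, Fintype.card_subtype, mul_comm]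
  rw [cnt, Finset.card_eq_sum_card_fiberwise (f := f) (t := Finset.univ.filter fun O : Q => Nat.card O.orbit = n)]
  · rw [← smul_eq_mul]
    refine Finset.sum_const_nat fun O hO' => ?_
    have hn := (Finset.mem_filter.1 hO').2
    rw [← hn, Nat.card_eq_fintype_card, ← Set.toFinset_card]
    congr 1
    ext x
    simp only [Finset.mem_filter, Finset.mem_univ, true_and, Set.mem_toFinset, MulAction.orbitRel.Quotient.mem_orbit]
    constructor
    · exact fun h => h.2
    · intro h
      refine ⟨?_, h⟩
      rw [period_eq_orbit, ← hO]
      rw [Set.toFinset_card, ← Nat.card_eq_fintype_card, show f x = O from h]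
  · intro x hx
    simp only [Finset.coe_filter, Finset.mem_univ, true_and, Set.mem_ofPred_eq] at hx ⊢
    rw [hO, ← period_eq_orbit, hx]

lemma period_eq_cycleOf (σ : Equiv.Perm V) (x : V) (hx : σ x ≠ x) :
    Function.minimalPeriod σ x = (σ.cycleOf x).support.card := by
  classical
  rw [period_eq_orbit, Nat.card_eq_fintype_card, ← Set.toFinset_card]
  congr 1
  ext y
  rw [Equiv.Perm.mem_support_cycleOf_iff' hx, Set.mem_toFinset, MulAction.mem_orbit_iff]
  constructor
  · rintro ⟨⟨_, k, rfl⟩, h⟩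
    exact ⟨k, h⟩
  · rintro ⟨k, h⟩
    exact ⟨⟨_, k, rfl⟩, h⟩

lemma cnt_cycleType (σ : Equiv.Perm V) (n : ℕ) (hn : 2 ≤ n) :
    cnt σ n = n * σ.cycleType.count n := by
  classical
  rw [Equiv.Perm.CycleType.count_def, Fintype.card_subtype]
  have hx : ∀ x, Function.minimalPeriod σ x = n → σ x ≠ x := by
    intro x h1 h2
    have : Function.minimalPeriod σ x = 1 := Function.minimalPeriod_eq_one_iff_isFixedPt.2 h2
    omega
  have e : (Finset.univ.filter fun c : σ.cycleFactorsFinset => (c : Equiv.Perm V).support.card = n).card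
     = (σ.cycleFactorsFinset.filter fun c => c.support.card = n).card := by
    rw [← Finset.card_map (Function.Embedding.subtype _)]
    congr 1
    ext c
    simp [and_comm]
  rw [e, cnt, Finset.card_eq_sum_card_fiberwise (f := σ.cycleOf)
    (t := σ.cycleFactorsFinset.filter fun c => c.support.card = n), mul_comm]
  · refine Finset.sum_const_nat fun c hc => ?_
    obtain ⟨hc1, hc2⟩ := Finset.mem_filter.1 hc
    rw [← hc2]
    congr 1
    ext x
    simp only [Finset.mem_filter, Finset.mem_univ, true_and]
    constructor
    · rintro ⟨h1, rfl⟩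
      rw [Equiv.Perm.mem_support_cycleOf_iff' (hx x (by omega))]
    · intro h
      have hc3 : c = σ.cycleOf x := Equiv.Perm.cycle_is_cycleOf h hc1
      have : σ x ≠ x := Equiv.Perm.mem_support.1 (Equiv.Perm.mem_cycleFactorsFinset_support_le hc1 h)
      rw [period_eq_cycleOf σ x this, ← hc3]
      exact ⟨rfl, rfl⟩
  · intro x h
    simp only [Finset.coe_filter, Finset.mem_univ, true_and, Set.mem_ofPred_eq] at h ⊢
    refine ⟨?_, ?_⟩
    · rw [Equiv.Perm.cycleOf_mem_cycleFactorsFinset_iff, Equiv.Perm.mem_support]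
      exact hx x h
    · rw [← period_eq_cycleOf σ x (hx x h), h]

/-- number of fixed points of `σ^k` -/
lemma card_fixed (σ : Equiv.Perm V) (k : ℕ) :
    (Finset.univ.filter fun x => (σ ^ k) x = x).card =
      ∑ n ∈ Finset.Icc 1 (Fintype.card V), if n ∣ k then cnt σ n else 0 := by
  rw [Finset.card_eq_sum_card_fiberwise (f := Function.minimalPeriod σ) (t := Finset.Icc 1 (Fintype.card V))]
  · refine Finset.sum_congr rfl fun n _ => ?_
    have : ∀ x, (σ ^ k) x = x ↔ Function.minimalPeriod σ x ∣ k := by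
      intro x
      rw [← Function.isPeriodicPt_iff_minimalPeriod_dvd, Function.IsPeriodicPt, Function.IsFixedPt,
        Equiv.Perm.iterate_eq_pow]
    simp only [this]
    split_ifs with h
    · rw [cnt]; congr 1; ext x; simp; rintro rfl; exact h
    · rw [Finset.card_eq_zero]; ext x; simp; rintro h1 rfl; exact h h1
  · intro x _
    simp [period_pos, period_le]

lemma sign_eq (σ : Equiv.Perm V) (N : ℕ) (hN : Fintype.card V ≤ N) (j : ℕ → ℕ) (hj : ∀ n, 1 ≤ n → cnt σ n = n * j n) :
    (Equiv.Perm.sign σ : ℤ) = ∏ α ∈ Finset.Icc 1 N, (-1) ^ j (2 * α) := by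
  have hc : ∀ n, 2 ≤ n → j n = σ.cycleType.count n := by
    intro n hn
    have h1 := cnt_cycleType σ n hn
    rw [hj n (by omega)] at h1
    exact Nat.eq_of_mul_eq_mul_left (by omega) h1
  rw [Equiv.Perm.sign_of_cycleType', Finset.prod_multiset_map_count]
  have h1 : ∏ m ∈ σ.cycleType.toFinset, (-(-1 : ℤˣ) ^ m) ^ (σ.cycleType.count m) =
      ∏ α ∈ Finset.Icc 1 N, (-1 : ℤˣ) ^ j (2 * α) := by
    have e1 : ∏ α ∈ Finset.Icc 1 N, (-1 : ℤˣ) ^ j (2 * α) =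
      ∏ m ∈ (Finset.Icc 1 N).image (fun α => 2 * α), (-(-1 : ℤˣ) ^ m) ^ (σ.cycleType.count m) := by
      rw [Finset.prod_image (by intro a _ b _ h; simpa using h)]
      refine Finset.prod_congr rfl fun α hα => ?_
      rw [Finset.mem_Icc] at hα
      rw [hc _ (by omega)]; simp [pow_mul]
    rw [e1]
    have e2 : ∀ s t : Finset ℕ, (∀ m ∈ s, m ∉ t → (-(-1 : ℤˣ) ^ m) ^ (σ.cycleType.count m) = 1) →
       ∏ m ∈ s, (-(-1 : ℤˣ) ^ m) ^ (σ.cycleType.count m) = ∏ m ∈ s ∩ t, (-(-1 : ℤˣ) ^ m) ^ (σ.cycleType.count m) := by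
      intro s t h
      symm
      apply Finset.prod_subset Finset.inter_subset_left
      intro m hm hm2
      exact h m hm (fun h => hm2 (Finset.mem_inter.2 ⟨hm, h⟩))
    rw [e2 _ ((Finset.Icc 1 N).image (fun α => 2 * α)), e2 ((Finset.Icc 1 N).image (fun α => 2 * α)) σ.cycleType.toFinset, Finset.inter_comm]
    · intro m _ hm
      rw [Multiset.mem_toFinset] at hm
      rw [Multiset.count_eq_zero_of_notMem hm, pow_zero]
    · intro m hm hm2
      rw [Multiset.mem_toFinset] at hm
      have h2 := Equiv.Perm.two_le_of_mem_cycleType hm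
      have h3 : m ≤ Fintype.card V := (Equiv.Perm.le_card_support_of_mem_cycleType hm).trans (Finset.card_le_univ _)
      have : ¬ Even m := by
        rintro ⟨r, hr⟩
        apply hm2
        rw [Finset.mem_image]
        exact ⟨r, by rw [Finset.mem_Icc]; omega, by omega⟩
      rw [Nat.not_even_iff_odd] at this
      rw [this.neg_one_pow]; simp
  rw [h1]
  simp

end

lemma finprod_Ici (f : ℕ → ℚ[X]) (a N : ℕ) (h : ∀ α, N < α → f α = 1) :
    ∏ᶠ α ∈ Set.Ici a, f α = ∏ α ∈ Finset.Icc a N, f α := by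
  apply finprod_mem_eq_prod_of_inter_mulSupport_eq
  ext x
  simp only [Set.mem_inter_iff, Set.mem_Ici, Function.mem_mulSupport, Finset.coe_Icc, Set.mem_Icc]
  have := h x
  constructor
  · rintro ⟨h1, h2⟩
    exact ⟨⟨h1, by by_contra h3; exact h2 (this (by omega))⟩, h2⟩
  · rintro ⟨⟨h1, _⟩, h2⟩
    exact ⟨h1, h2⟩

lemma finprod_Ioi (f : ℕ → ℚ[X]) (a N : ℕ) (h : ∀ α, N < α → f α = 1) :
    ∏ᶠ α ∈ Set.Ioi a, f α = ∏ α ∈ Finset.Ioc a N, f α := by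
  apply finprod_mem_eq_prod_of_inter_mulSupport_eq
  ext x
  simp only [Set.mem_inter_iff, Set.mem_Ioi, Function.mem_mulSupport, Finset.coe_Ioc, Set.mem_Ioc]
  have := h x
  constructor
  · rintro ⟨h1, h2⟩
    exact ⟨⟨h1, by by_contra h3; exact h2 (this (by omega))⟩, h2⟩
  · rintro ⟨⟨h1, _⟩, h2⟩
    exact ⟨h1, h2⟩

lemma sum_sq (u : ℕ → ℚ) (N : ℕ) :
    (∑ n ∈ Finset.Icc 1 N, u n) ^ 2 = ∑ n ∈ Finset.Icc 1 N, u n ^ 2 +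
      2 * ∑ α ∈ Finset.Icc 1 N, ∑ β ∈ Finset.Ioc α N, u α * u β := by
  induction N with
  | zero => simp
  | succ N ih =>
    rw [Finset.sum_Icc_succ_top (by omega), Finset.sum_Icc_succ_top (by omega),
      Finset.sum_Icc_succ_top (by omega)]
    have : ∑ α ∈ Finset.Icc 1 N, ∑ β ∈ Finset.Ioc α (N + 1), u α * u β =
      ∑ α ∈ Finset.Icc 1 N, ∑ β ∈ Finset.Ioc α N, u α * u β + (∑ α ∈ Finset.Icc 1 N, u α) * u (N + 1) := by
      rw [Finset.sum_mul, ← Finset.sum_add_distrib]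
      refine Finset.sum_congr rfl fun α hα => ?_
      rw [Finset.mem_Icc] at hα
      rw [Finset.sum_Ioc_succ_top (by omega)]
    rw [this]
    simp only [Finset.Ioc_self, Finset.sum_empty]
    linear_combination ih

lemma sum_odd_even (h : ℕ → ℚ) (N : ℕ) (hN : ∀ n, N < n → h n = 0) :
    ∑ n ∈ Finset.Icc 1 N, h n = ∑ α ∈ Finset.Icc 1 N, (h (2 * α - 1) + h (2 * α)) := by
  have h1 : ∀ M, ∑ α ∈ Finset.Icc 1 M, (h (2 * α - 1) + h (2 * α)) = ∑ n ∈ Finset.Icc 1 (2 * M), h n := by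
    intro M
    induction M with
    | zero => simp
    | succ M ih =>
      rw [Finset.sum_Icc_succ_top (by omega), ih, show 2 * (M + 1) = 2 * M + 1 + 1 by ring,
        Finset.sum_Icc_succ_top (by omega), Finset.sum_Icc_succ_top (by omega)]
      simp; ring
  rw [h1]
  apply Finset.sum_subset
  · intro x; simp only [Finset.mem_Icc]; omega
  · intro x hx hx2
    simp only [Finset.mem_Icc] at hx hx2
    exact hN x (by omega)

lemma term_id (α k : ℕ) (hα : 1 ≤ α) (j1 j2 : ℚ) :
    (j1 * ((if (2 * α - 1) ∣ k then ((2 * α - 1 : ℕ) : ℚ) ^ 2 else 0) - if (2 * α - 1) ∣ 2 * k then ((2 * α - 1 : ℕ) : ℚ) else 0))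
    + (j2 * ((if 2 * α ∣ k then ((2 * α : ℕ) : ℚ) ^ 2 else 0) - if 2 * α ∣ 2 * k then ((2 * α : ℕ) : ℚ) else 0))
    = 2 * (((α - 1 : ℕ) : ℚ) * j1 * (if (2 * α - 1) ∣ k then ((2 * α - 1 : ℕ) : ℚ) else 0))
     + 2 * (j2 * ((if α ∣ k then (α : ℚ) * (-1) ^ (k / α) else 0) + ((α - 1 : ℕ) : ℚ) * (if 2 * α ∣ k then ((2 * α : ℕ) : ℚ) else 0))) := by
  obtain ⟨m, rfl⟩ : ∃ m, α = m + 1 := ⟨α - 1, by omega⟩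
  have e1 : 2 * (m + 1) - 1 = 2 * m + 1 := by omega
  have e2 : (2 * m + 1) ∣ 2 * k ↔ (2 * m + 1) ∣ k := by
    apply Nat.Coprime.dvd_mul_left
    simp
  have e3 : 2 * (m + 1) ∣ 2 * k ↔ (m + 1) ∣ k := Nat.mul_dvd_mul_iff_left (by omega)
  simp only [e1, e2, e3, Nat.add_sub_cancel]
  push_cast
  have e4 : (if (m + 1) ∣ k then ((m : ℚ) + 1) * (-1) ^ (k / (m + 1)) else 0) =
     (if 2 * (m + 1) ∣ k then 2 * ((m : ℚ) + 1) else 0) - (if (m + 1) ∣ k then ((m : ℚ) + 1) else 0) := by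
    by_cases h : (m + 1) ∣ k
    · obtain ⟨r, rfl⟩ := h
      have : 2 * (m + 1) ∣ (m + 1) * r ↔ Even r := by
        rw [mul_comm 2, Nat.mul_dvd_mul_iff_left (by omega), even_iff_two_dvd]
      simp only [this, dvd_mul_right, if_true, Nat.mul_div_cancel_left r (Nat.succ_pos m)]
      rcases Nat.even_or_odd r with h | h
      · rw [h.neg_one_pow]; simp [h]; ring
      · rw [h.neg_one_pow]; simp [Nat.not_even_iff_odd.2 h]
    · have : ¬ 2 * (m + 1) ∣ k := fun h2 => h (dvd_trans (dvd_mul_left _ _) h2)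
      simp [h, this]
  rw [e4]
  split_ifs <;> ring

lemma hasLog_sub (n : ℕ) (hn : 1 ≤ n) :
    HasLog (1 - X ^ n) (fun k => if n ∣ k then (n : ℚ) else 0) := by
  have := hasLog_one_sub 1 n hn
  simpa using this

lemma hasLog_add (n : ℕ) (hn : 1 ≤ n) :
    HasLog (1 + X ^ n) (fun k => if n ∣ k then (n : ℚ) * (-1) ^ (k / n) else 0) := by
  have := hasLog_one_sub (-1) n hn
  simpa using this

end S7

open S7 in
/-- Let `V` be a finite linearly ordered set, `σ` a permutation of `V`,
and for `α ≥ 1` let `j α` be the number of orbits of `⟨σ⟩` on `V` of cardinality `α`.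
Let `A_σ` be the signed permutation endomorphism of the free `ℚ`-vector space on the
2-element subsets of `V` (encoded by pairs `x < y`) induced by `σ`, with sign `-1` exactly
when `σ` reverses the order of the pair.  Then, in `ℚ[t]`,
`det (1 - t·A_σ) = sgn(σ) · ∏_{α≥1} (1 - t^{2α-1})^((α-1)·j_{2α-1})
· ∏_{α≥1} (-(1 + t^α)·(1 - t^{2α})^{α-1})^(j_{2α})
· ∏_{α≥1} (1 - t^α)^(α·j_α(j_α-1)/2)
· ∏_{β>α≥1} (1 - t^{lcm(α,β)})^(gcd(α,β)·j_α·j_β)`. -/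
theorem stmt_7 {V : Type*} [Fintype V] [LinearOrder V] (σ : Equiv.Perm V)
    (j : ℕ → ℕ)
    (hj : ∀ α, 1 ≤ α → j α = Nat.card {O : MulAction.orbitRel.Quotient
        (Subgroup.zpowers σ) V // Nat.card O.orbit = α}) :
    (1 - (X : ℚ[X]) • ((pairMatrix σ).map C)).det =
    ((Equiv.Perm.sign σ : ℤ) : ℚ[X]) *
    (∏ᶠ α ∈ Set.Ici 1, (1 - (X : ℚ[X]) ^ (2 * α - 1)) ^ ((α - 1) * j (2 * α - 1))) *
    (∏ᶠ α ∈ Set.Ici 1,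
      (-((1 + (X : ℚ[X]) ^ α) * (1 - (X : ℚ[X]) ^ (2 * α)) ^ (α - 1))) ^ (j (2 * α))) *
    (∏ᶠ α ∈ Set.Ici 1, (1 - (X : ℚ[X]) ^ α) ^ (α * (j α * (j α - 1) / 2))) *
    (∏ᶠ α ∈ Set.Ici 1, ∏ᶠ β ∈ Set.Ioi α,
      (1 - (X : ℚ[X]) ^ Nat.lcm α β) ^ (Nat.gcd α β * (j α * j β))) := by
  have hcnt : ∀ n, 1 ≤ n → cnt σ n = n * j n := fun n hn => by rw [cnt_orbits, hj n hn]
  set N := Fintype.card V with hN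
  have hj0 : ∀ n, N < n → j n = 0 := by
    intro n hn
    have h1 := hcnt n (by omega)
    have h2 : cnt σ n = 0 := by
      rw [cnt, Finset.card_eq_zero, Finset.filter_eq_empty_iff]
      intro x _ hx
      have := period_le σ x
      omega
    rw [h2] at h1
    rcases Nat.mul_eq_zero.1 h1.symm with h | h
    · omega
    · exact h
  rw [finprod_Ici _ 1 N (fun α hα => by rw [hj0 (2 * α - 1) (by omega)]; simp),
    finprod_Ici _ 1 N (fun α hα => by rw [hj0 (2 * α) (by omega)]; simp),
    finprod_Ici _ 1 N (fun α hα => by rw [hj0 α (by omega)]; simp),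
    finprod_Ici (fun α => ∏ᶠ β ∈ Set.Ioi α,
      (1 - (X : ℚ[X]) ^ Nat.lcm α β) ^ (Nat.gcd α β * (j α * j β))) 1 N
      (fun α hα => by simp [hj0 α (by omega)])]
  have hin : ∀ α, ∏ᶠ β ∈ Set.Ioi α, (1 - (X : ℚ[X]) ^ Nat.lcm α β) ^ (Nat.gcd α β * (j α * j β))
      = ∏ β ∈ Finset.Ioc α N, (1 - (X : ℚ[X]) ^ Nat.lcm α β) ^ (Nat.gcd α β * (j α * j β)) :=
    fun α => finprod_Ioi _ α N (fun β hβ => by rw [hj0 β hβ]; simp)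
  simp only [hin]
  -- signs
  have hsgn : ((Equiv.Perm.sign σ : ℤ) : ℚ[X]) *
      ∏ α ∈ Finset.Icc 1 N, (-((1 + (X : ℚ[X]) ^ α) * (1 - (X : ℚ[X]) ^ (2 * α)) ^ (α - 1))) ^ (j (2 * α))
      = ∏ α ∈ Finset.Icc 1 N, ((1 + (X : ℚ[X]) ^ α) * (1 - (X : ℚ[X]) ^ (2 * α)) ^ (α - 1)) ^ (j (2 * α)) := by
    rw [sign_eq σ N le_rfl j hcnt]
    push_cast
    rw [← Finset.prod_mul_distrib]
    refine Finset.prod_congr rfl fun α _ => ?_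
    rw [← mul_pow]; congr 1; ring
  rw [mul_right_comm _ _ (∏ α ∈ Finset.Icc 1 N, (-((1 + (X : ℚ[X]) ^ α) * (1 - (X : ℚ[X]) ^ (2 * α)) ^ (α - 1))) ^ (j (2 * α))), hsgn]
  have L1 := HasLog.prod (Finset.Icc 1 N) (fun α hα =>
    (hasLog_sub (2 * α - 1) (by rw [Finset.mem_Icc] at hα; omega)).pow ((α - 1) * j (2 * α - 1)))
  have L2 := HasLog.prod (Finset.Icc 1 N) (fun α hα =>
    ((hasLog_add α (Finset.mem_Icc.1 hα).1).mul
      ((hasLog_sub (2 * α) (by rw [Finset.mem_Icc] at hα; omega)).pow (α - 1))).pow (j (2 * α)))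
  have L3 := HasLog.prod (Finset.Icc 1 N) (fun α hα =>
    (hasLog_sub α (Finset.mem_Icc.1 hα).1).pow (α * (j α * (j α - 1) / 2)))
  have L4 := HasLog.prod (Finset.Icc 1 N) (fun α hα => HasLog.prod (Finset.Ioc α N) (fun β hβ =>
    (hasLog_sub (Nat.lcm α β) (by
      rw [Finset.mem_Icc] at hα; rw [Finset.mem_Ioc] at hβ
      exact Nat.lcm_pos (by omega) (by omega))).pow (Nat.gcd α β * (j α * j β))))
  refine (hasLog_det (pairMatrix σ)).unique (((L2.mul L1).mul L3).mul L4) ?_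
  intro k hk
  have hF : ∀ k, ((Finset.univ.filter fun x => (σ ^ k) x = x).card : ℚ) =
      ∑ n ∈ Finset.Icc 1 N, if n ∣ k then (n : ℚ) * j n else 0 := by
    intro k
    rw [card_fixed]
    push_cast
    refine Finset.sum_congr rfl fun n hn => ?_
    rw [hcnt n (Finset.mem_Icc.1 hn).1]
    push_cast; rfl
  have T := trace_pair (σ ^ k)
  rw [← pow_add, ← two_mul, hF, hF, sum_sq] at T
  have R3 : 2 * ∑ α ∈ Finset.Icc 1 N, ((α * (j α * (j α - 1) / 2) : ℕ) : ℚ) * (if α ∣ k then (α : ℚ) else 0)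
      = ∑ α ∈ Finset.Icc 1 N, ((if α ∣ k then (α : ℚ) * j α else 0) ^ 2 -
          j α * (if α ∣ k then (α : ℚ) ^ 2 else 0)) := by
    rw [Finset.mul_sum]
    refine Finset.sum_congr rfl fun α _ => ?_
    have hd : (2 * (j α * (j α - 1) / 2) : ℕ) = j α * (j α - 1) :=
      Nat.mul_div_cancel' (even_iff_two_dvd.1 (Nat.even_mul_pred_self _))
    have hd' : (2 : ℚ) * ((j α * (j α - 1) / 2 : ℕ) : ℚ) = j α * (j α - 1) := by
      have h := congrArg (Nat.cast (R := ℚ)) hd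
      rw [Nat.cast_mul, Nat.cast_mul] at h
      rw [Nat.cast_ofNat] at h
      rw [h]
      rcases Nat.eq_zero_or_pos (j α) with h0 | h0
      · simp [h0]
      · rw [Nat.cast_sub h0]; simp
    rw [Nat.cast_mul]
    split_ifs
    · linear_combination (α : ℚ) ^ 2 * hd'
    · ring
  have R4 : ∑ α ∈ Finset.Icc 1 N, ∑ β ∈ Finset.Ioc α N,
      ((Nat.gcd α β * (j α * j β) : ℕ) : ℚ) * (if Nat.lcm α β ∣ k then ((Nat.lcm α β : ℕ) : ℚ) else 0)
      = ∑ α ∈ Finset.Icc 1 N, ∑ β ∈ Finset.Ioc α N,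
        (if α ∣ k then (α : ℚ) * j α else 0) * (if β ∣ k then (β : ℚ) * j β else 0) := by
    refine Finset.sum_congr rfl fun α _ => Finset.sum_congr rfl fun β _ => ?_
    have hg : (Nat.gcd α β : ℚ) * (Nat.lcm α β : ℚ) = α * β := by
      exact_mod_cast Nat.gcd_mul_lcm α β
    push_cast
    by_cases h1 : α ∣ k <;> by_cases h2 : β ∣ k
    · rw [if_pos h1, if_pos h2, if_pos (Nat.lcm_dvd h1 h2)]
      linear_combination (j α * j β : ℚ) * hg
    · rw [if_neg h2, if_neg (fun h => h2 ((Nat.dvd_lcm_right α β).trans h))]; ring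
    · rw [if_neg h1, if_neg (fun h => h1 ((Nat.dvd_lcm_left α β).trans h))]; ring
    · rw [if_neg h1, if_neg (fun h => h1 ((Nat.dvd_lcm_left α β).trans h))]; ring
  have R12 := sum_odd_even (fun n => (j n : ℚ) * ((if n ∣ k then (n : ℚ) ^ 2 else 0) - if n ∣ 2 * k then (n : ℚ) else 0)) N
    (fun n hn => by simp [hj0 n hn])
  rw [Finset.sum_congr rfl (fun α hα => term_id α k (Finset.mem_Icc.1 hα).1 _ _), Finset.sum_add_distrib,
    ← Finset.mul_sum, ← Finset.mul_sum] at R12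
  simp only [mul_sub, Finset.sum_sub_distrib] at R12 R3
  have R5 : ∑ n ∈ Finset.Icc 1 N, (if n ∣ 2 * k then (n : ℚ) * j n else 0) =
      ∑ n ∈ Finset.Icc 1 N, (j n : ℚ) * if n ∣ 2 * k then (n : ℚ) else 0 := by
    refine Finset.sum_congr rfl fun n _ => ?_
    split_ifs <;> ring
  rw [R5] at T
  simp only [pairMatrix_pow, Nat.cast_mul] at R3 R4 R12 ⊢
  linear_combination (1 / 2) * T - (1 / 2) * R3 + (1 / 2) * R12 - R4
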